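/- Let r = 3, let q be a prime power, and fix pairwise distinct c₁,c₂,c₃ ∈ 𝔽_q and pairwise distinct c₁′,c₂′,c₃′ ∈ 𝔽_q. Let 𝒞 ⊆ N₃⊗ℝ be the cone of nef classes α = (a,a′,k₁,k₂,k₃) with 2a ≥ k₁+k₂+k₃ and 2a′ ≥ k₁+k₂+k₃, and set N(𝒞, d) = (q−1)^{−2} Σ #M̃(a,a′,𝐤), the sum over lattice points α ∈ 𝒞 ∩ N₃ with a ≥ 1, a′ ≥ 1 and 0 < h(α) ≤ d. Then the limit α(𝒞) := lim_{d→∞} q^{−d} d^{−4} Σ_{α ∈ 𝒞 ∩ N₃, 0 < h(α) ≤ d} q^{h(α)} exists, and limsup_{d→∞} N(𝒞, d)/(q^d d^4) ≤ α(𝒞) · q² · (1−q^{−1})^{−6}. -/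

import Mathlib

/-!
Both assertions follow from a bound for each single class `(a, a′, 𝐤)` with `Σ kᵢ ≤ 2a` and
`Σ kᵢ ≤ 2a′`:

  `(q − 1)³ · #M̃(a, a′, 𝐤) ≤ q ^ (h + 7)`,  where `h = 2a + 2a′ − Σ kᵢ`.

To prove it, mark each quadruple by a choice of its three greatest common divisors `gᵢ`; rescaling
them gives `(q − 1)³` markings of every quadruple (`mtilde_le_marked`). There are at most
`q ^ (Σ kᵢ + 3)` triples `(gᵢ)`. For a fixed triple, the pairs `(p₁, p₂)` of degree `a` with
`gᵢ ∣ p₁ − cᵢ p₂` form a vector space `L`. If `L` contains a coprime pair `(s₁, s₂)`, then the `gᵢ`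
are pairwise coprime, and `p ↦ s₁ p₂ − s₂ p₁` maps `L` to the forms of degree `2a` divisible by
`g₁ g₂ g₃`, its kernel being the line spanned by `s`. Hence `#L ≤ q ^ (2a − Σ kᵢ + 2)`
(`pairSet_bound`), and likewise for the pairs of degree `a′`. Geometrically, a rank two bundle on
`ℙ¹` with a nowhere vanishing section and nonnegative degree has no more sections than
Riemann–Roch predicts.

Division by `(q − 1)²` turns the bound into `q ^ h · q² (1 − q⁻¹)⁻⁵` per class, which is even smaller
than the required `q ^ h · q² (1 − q⁻¹)⁻⁶` (`mtilde_le`). Thus the counting function is at most the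
sum defining `α(𝒞)` times the claimed constant.

For the existence of `α(𝒞)`, the points of the cone of height `n` correspond to the points of
`n⁻¹ ℤ⁴` in a fixed compact convex subset of `ℝ⁴` (`polytope`), so that their number divided by
`n⁴` tends to the volume of this set (`slice_asymptotic`). Dominated convergence for the sum over
heights then yields the limit (`geometric_sum_asymptotic`).
-/

open scoped BigOperators
open Filter

noncomputable section

/-- Binary forms live in the polynomial ring in two variables. -/
abbrev BForm (K : Type) [Field K] := MvPolynomial (Fin 2) K

/-- The counting set `M̃(a, a', 𝐤)`: quadruples `(s₁, s₂, t₁, t₂)` of binary forms with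
`s₁, s₂` homogeneous of degree `a` and `t₁, t₂` homogeneous of degree `a'`, such that
`gcd (s₁, s₂)` and `gcd (t₁, t₂)` are nonzero constants and, for each `i`, the nonzero
forms `s₁ − cᵢ s₂` and `t₁ − cᵢ′ t₂` have a gcd which is homogeneous of degree exactly
`kᵢ`. -/
def MtildeSet (K : Type) [Field K] (r : ℕ) (c c' : Fin r → K) (a a' : ℕ)
    (k : Fin r → ℕ) : Set (BForm K × BForm K × BForm K × BForm K) :=
  {x | MvPolynomial.IsHomogeneous x.1 a ∧ MvPolynomial.IsHomogeneous x.2.1 a ∧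
       MvPolynomial.IsHomogeneous x.2.2.1 a' ∧ MvPolynomial.IsHomogeneous x.2.2.2 a' ∧
       (∀ d : BForm K, d ∣ x.1 → d ∣ x.2.1 → IsUnit d) ∧
       (∀ d : BForm K, d ∣ x.2.2.1 → d ∣ x.2.2.2 → IsUnit d) ∧
       ∀ i : Fin r,
         x.1 - MvPolynomial.C (c i) * x.2.1 ≠ 0 ∧
         x.2.2.1 - MvPolynomial.C (c' i) * x.2.2.2 ≠ 0 ∧
         ∃ g : BForm K, MvPolynomial.IsHomogeneous g (k i) ∧
           (g ∣ x.1 - MvPolynomial.C (c i) * x.2.1) ∧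
           (g ∣ x.2.2.1 - MvPolynomial.C (c' i) * x.2.2.2) ∧
           ∀ d : BForm K, d ∣ x.1 - MvPolynomial.C (c i) * x.2.1 →
             d ∣ x.2.2.1 - MvPolynomial.C (c' i) * x.2.2.2 → d ∣ g}

/-- The intersection form on `N_r = ℤf ⊕ ℤf′ ⊕ ℤe₁ ⊕ ⋯ ⊕ ℤe_r` (coordinates
`(f, f′, e₁, …, e_r)`): `f·f = f′·f′ = 0`, `f·f′ = 1`, `f·eᵢ = f′·eᵢ = 0`,
`eᵢ·eⱼ = −δᵢⱼ`. -/
def inter (r : ℕ) (x y : Fin (r + 2) → ℤ) : ℤ :=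
  x 0 * y 1 + x 1 * y 0 -
    ∑ i ∈ Finset.univ.filter fun i : Fin (r + 2) => 2 ≤ (i : ℕ), x i * y i

/-- The anticanonical class `−K = 2f + 2f′ − (e₁ + ⋯ + e_r)`. -/
def antiK (r : ℕ) : Fin (r + 2) → ℤ := fun i => if (i : ℕ) < 2 then 2 else -1

/-- A `(−1)`-class: `v·v = −1` and `v·(−K) = 1`. -/
def minusOneClass (r : ℕ) (v : Fin (r + 2) → ℤ) : Prop :=
  inter r v v = -1 ∧ inter r v (antiK r) = 1

/-- A class is nef if it pairs nonnegatively with every `(−1)`-class. -/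
def nefVec (r : ℕ) (α : Fin (r + 2) → ℤ) : Prop :=
  ∀ v : Fin (r + 2) → ℤ, minusOneClass r v → 0 ≤ inter r α v

/-- The class `α = a′f + af′ − Σᵢ kᵢeᵢ` with invariants `(a, a′, 𝐤)`. -/
def vecOf (r : ℕ) (a a' : ℕ) (k : Fin r → ℕ) : Fin (r + 2) → ℤ := fun i =>
  if h0 : (i : ℕ) = 0 then (a' : ℤ)
  else if h1 : (i : ℕ) = 1 then (a : ℤ)
  else -(k ⟨(i : ℕ) - 2, by have := i.isLt; omega⟩ : ℤ)

/-- The height `h(α) = 2a + 2a′ − Σᵢ kᵢ` of the class with invariants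
`x = (a, a′, 𝐤)`, as a rational number. -/
def hQ (r : ℕ) (x : ℕ × ℕ × (Fin r → ℕ)) : ℚ :=
  2 * x.1 + 2 * x.2.1 - ∑ i, (x.2.2 i : ℚ)

/-- The height `h(α) = 2a + 2a′ − Σᵢ kᵢ` of the class with invariants
`x = (a, a′, 𝐤)`, as a natural number. -/
def hN (r : ℕ) (x : ℕ × ℕ × (Fin r → ℕ)) : ℕ :=
  2 * x.1 + 2 * x.2.1 - ∑ i, x.2.2 i

/-- Lattice points of the cone of nef classes `α = (a, a′, 𝐤)` with
`2a − Σkᵢ ≥ ε₁ h(α)`, `2a′ − Σkᵢ ≥ ε₁ h(α)`, `kᵢ ≥ ε₂ h(α)` for all `i`,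
together with the counting condition `0 < h(α) ≤ d`. -/
def coneSet (r : ℕ) (ε₁ ε₂ : ℚ) (d : ℕ) : Set (ℕ × ℕ × (Fin r → ℕ)) :=
  {x | nefVec r (vecOf r x.1 x.2.1 x.2.2) ∧
    ε₁ * hQ r x ≤ 2 * x.1 - ∑ i, (x.2.2 i : ℚ) ∧
    ε₁ * hQ r x ≤ 2 * x.2.1 - ∑ i, (x.2.2 i : ℚ) ∧
    (∀ i, ε₂ * hQ r x ≤ (x.2.2 i : ℚ)) ∧
    0 < hQ r x ∧ hQ r x ≤ d}

/-- Lattice points of the cone `𝒞` of nef classes `α = (a, a′, 𝐤)` on the split quintic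
del Pezzo surface with `2a ≥ Σkᵢ` and `2a′ ≥ Σkᵢ`, with the counting condition
`0 < h(α) ≤ d`. -/
def coneSet11 (d : ℕ) : Set (ℕ × ℕ × (Fin 3 → ℕ)) :=
  {x | nefVec 3 (vecOf 3 x.1 x.2.1 x.2.2) ∧
    (∑ i, x.2.2 i ≤ 2 * x.1) ∧ (∑ i, x.2.2 i ≤ 2 * x.2.1) ∧
    0 < hN 3 x ∧ hN 3 x ≤ d}

/-! ### Counting binary forms -/

lemma homogeneous_set_bound (K : Type) [Field K] [Fintype K] (n : ℕ) :
    {p : BForm K | MvPolynomial.IsHomogeneous p n}.Finite ∧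
    {p : BForm K | MvPolynomial.IsHomogeneous p n}.ncard ≤ Fintype.card K ^ (n + 1) := by
  classical
  let φ : BForm K → (Fin (n + 1) → K) := fun p i =>
    MvPolynomial.coeff (Finsupp.single 0 (i : ℕ) + Finsupp.single 1 (n - (i : ℕ))) p
  have hinj : Set.InjOn φ {p : BForm K | MvPolynomial.IsHomogeneous p n} := by
    intro p hp p' hp' h
    ext m
    by_cases hm : m.degree = n
    · have hsum : m 0 + m 1 = n := by
        rw [← hm, Finsupp.degree_eq_sum, Fin.sum_univ_two]
      have := congrFun h ⟨m 0, by omega⟩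
      have hm' : (Finsupp.single 0 (m 0) + Finsupp.single 1 (n - m 0) : Fin 2 →₀ ℕ) = m := by
        ext j
        fin_cases j
        · simp
        · simp; omega
      simp only [φ] at this
      rwa [hm'] at this
    · rw [MvPolynomial.IsHomogeneous.coeff_eq_zero hp hm,
        MvPolynomial.IsHomogeneous.coeff_eq_zero hp' hm]
  have hfin : {p : BForm K | MvPolynomial.IsHomogeneous p n}.Finite :=
    Set.Finite.of_finite_image (Set.toFinite _) hinj
  refine ⟨hfin, ?_⟩
  have := Set.ncard_le_ncard_of_injOn (t := Set.univ) φ (fun _ _ => Set.mem_univ _) hinj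
  simpa [Set.ncard_univ] using this

/-- The cofactor of a form in a form may be taken to be a form of the complementary degree. -/
lemma exists_homogeneous_quotient {K : Type} [Field K] {G W : BForm K} {m n : ℕ}
    (hG : MvPolynomial.IsHomogeneous G m) (hW : MvPolynomial.IsHomogeneous W n) (hmn : m ≤ n)
    (h : G ∣ W) : ∃ w : BForm K, MvPolynomial.IsHomogeneous w (n - m) ∧ W = G * w := by
  obtain ⟨w, rfl⟩ := h
  refine ⟨MvPolynomial.homogeneousComponent (n - m) w,
    MvPolynomial.homogeneousComponent_isHomogeneous _ _, ?_⟩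
  rw [← MvPolynomial.homogeneousComponent_eq_self hW]
  conv_lhs => rw [← MvPolynomial.sum_homogeneousComponent w, Finset.mul_sum, map_sum]
  have key : ∀ i, MvPolynomial.homogeneousComponent n
      (G * MvPolynomial.homogeneousComponent i w) =
      if n - m = i then G * MvPolynomial.homogeneousComponent i w else 0 := by
    intro i
    rw [MvPolynomial.homogeneousComponent_of_mem
      (hG.mul (MvPolynomial.homogeneousComponent_isHomogeneous i w))]
    congr 1
    apply propext
    omega
  simp_rw [key]
  rw [Finset.sum_ite_eq]
  split_ifs with hi
  · rfl
  · rw [MvPolynomial.homogeneousComponent_eq_zero _ _ (by simp at hi; omega), mul_zero]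

/-! ### Pairs of forms subject to divisibility conditions -/

/-- Pairs `(p₁, p₂)` of forms of degree `a` with `gᵢ ∣ p₁ − cᵢ p₂` for each `i`. -/
def PairSet (K : Type) [Field K] (c : Fin 3 → K) (a : ℕ) (g : Fin 3 → BForm K) :
    Set (BForm K × BForm K) :=
  {p | MvPolynomial.IsHomogeneous p.1 a ∧ MvPolynomial.IsHomogeneous p.2 a ∧
    ∀ i, g i ∣ p.1 - MvPolynomial.C (c i) * p.2}

lemma isRelPrime_of_conditions {K : Type} [Field K] {c : Fin 3 → K}
    (hc : Function.Injective c) {s₁ s₂ : BForm K} (hs : IsRelPrime s₁ s₂) {g : Fin 3 → BForm K}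
    (hg : ∀ i, g i ∣ s₁ - MvPolynomial.C (c i) * s₂) :
    Pairwise (Function.onFun IsRelPrime g) := by
  intro i j hij d hdi hdj
  have h1 := hdi.trans (hg i)
  have h2 := hdj.trans (hg j)
  have hu : IsUnit (MvPolynomial.C (c j - c i) : BForm K) :=
    (IsUnit.mk0 _ (sub_ne_zero.2 fun h => hij (hc h).symm)).map MvPolynomial.C
  have h3 : d ∣ s₂ := by
    have := dvd_sub h1 h2
    have e : s₁ - MvPolynomial.C (c i) * s₂ - (s₁ - MvPolynomial.C (c j) * s₂) =
        MvPolynomial.C (c j - c i) * s₂ := by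
      rw [MvPolynomial.C_sub]; ring
    rw [e] at this
    exact hu.dvd_mul_left.1 this
  have h4 : d ∣ s₁ := by
    have := dvd_add h1 (h3.mul_left (MvPolynomial.C (c i)))
    simpa using this
  exact hs h4 h3

/-- A pair proportional to a primitive pair of the same degree is a constant multiple of it. -/
lemma exists_const_of_wedge_eq_zero {K : Type} [Field K] {s₁ s₂ p₁ p₂ : BForm K} {a : ℕ}
    (hs : IsRelPrime s₁ s₂)
    (h1 : MvPolynomial.IsHomogeneous s₁ a) (h2 : MvPolynomial.IsHomogeneous s₂ a)
    (h3 : MvPolynomial.IsHomogeneous p₁ a) (h4 : MvPolynomial.IsHomogeneous p₂ a)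
    (hW : s₁ * p₂ - s₂ * p₁ = 0) :
    ∃ x : K, p₁ = MvPolynomial.C x * s₁ ∧ p₂ = MvPolynomial.C x * s₂ := by
  have hW' : s₁ * p₂ = s₂ * p₁ := sub_eq_zero.1 hW
  have aux : ∀ {s p l : BForm K}, MvPolynomial.IsHomogeneous s a →
      MvPolynomial.IsHomogeneous p a → s ≠ 0 → p = s * l → ∃ x : K, l = MvPolynomial.C x := by
    intro s p l hs hp hs0 he
    by_cases hl : l = 0
    · exact ⟨0, by simp [hl]⟩
    · have hp0 : p ≠ 0 := he ▸ mul_ne_zero hs0 hl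
      have := MvPolynomial.totalDegree_mul_of_isDomain hs0 hl
      rw [← he, hp.totalDegree hp0, hs.totalDegree hs0] at this
      exact ⟨_, MvPolynomial.totalDegree_eq_zero_iff_eq_C.1 (by omega)⟩
  by_cases hs1 : s₁ = 0
  · have hs2 : s₂ ≠ 0 := by
      rintro rfl
      exact not_isUnit_zero (hs (d := 0) (by simp [hs1]) (by simp))
    have hp : s₂ ∣ p₂ := hs.symm.dvd_of_dvd_mul_left ⟨p₁, hW'⟩
    obtain ⟨l, hl⟩ := hp
    obtain ⟨x, rfl⟩ := aux h2 h4 hs2 hl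
    refine ⟨x, ?_, by rw [hl, mul_comm]⟩
    apply mul_left_cancel₀ hs2
    rw [← hW', hl]; ring
  · have hp : s₁ ∣ p₁ := hs.dvd_of_dvd_mul_left ⟨p₂, hW'.symm⟩
    obtain ⟨l, hl⟩ := hp
    obtain ⟨x, rfl⟩ := aux h1 h3 hs1 hl
    refine ⟨x, by rw [hl, mul_comm], ?_⟩
    apply mul_left_cancel₀ hs1
    rw [hW', hl]; ring

/-- If the `𝔽_q`-space of pairs with `gᵢ ∣ p₁ − cᵢ p₂` contains a primitive pair `s`, its dimension
is at most `2a − Σ kᵢ + 2`: the wedge `p ↦ s₁ p₂ − s₂ p₁` has the line spanned by `s` as its kernel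
and takes values in the multiples of `∏ gᵢ` of degree `2a`. -/
lemma pairSet_bound {K : Type} [Field K] [Fintype K] {c : Fin 3 → K}
    (hc : Function.Injective c) {a : ℕ} {k : Fin 3 → ℕ} {g : Fin 3 → BForm K}
    (hg : ∀ i, MvPolynomial.IsHomogeneous (g i) (k i)) (hk : ∑ i, k i ≤ 2 * a)
    {s : BForm K × BForm K} (hs : s ∈ PairSet K c a g) (hprim : IsRelPrime s.1 s.2) :
    (PairSet K c a g).ncard ≤ Fintype.card K ^ (2 * a - ∑ i, k i + 2) := by
  classical
  have hG : MvPolynomial.IsHomogeneous (∏ i, g i) (∑ i, k i) :=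
    MvPolynomial.IsHomogeneous.prod _ _ _ fun i _ => hg i
  have hrel := isRelPrime_of_conditions hc hprim hs.2.2
  have hdvd : ∀ p ∈ PairSet K c a g, ∃ w : BForm K,
      MvPolynomial.IsHomogeneous w (2 * a - ∑ i, k i) ∧
        s.1 * p.2 - s.2 * p.1 = (∏ i, g i) * w := by
    intro p hp
    refine exists_homogeneous_quotient hG ?_ hk ?_
    · rw [two_mul]
      exact (hs.1.mul hp.2.1).sub (hs.2.1.mul hp.1)
    · refine Fintype.prod_dvd_of_isRelPrime hrel fun i => ?_
      -- modulo `g i` both pairs are multiples of `(c i, 1)`, so that their wedge vanishes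
      have e : s.1 * p.2 - s.2 * p.1 = (s.1 - MvPolynomial.C (c i) * s.2) * p.2 -
          s.2 * (p.1 - MvPolynomial.C (c i) * p.2) := by ring
      rw [e]
      exact dvd_sub ((hs.2.2 i).mul_right _) ((hp.2.2 i).mul_left _)
  choose! w hw using hdvd
  have hl : ∃ l : BForm K × BForm K →ₗ[K] K, l s ≠ 0 := by
    by_cases h1 : s.1 = 0
    · have h2 : s.2 ≠ 0 := by
        intro h
        exact not_isUnit_zero (hprim (d := 0) (by simp [h1]) (by simp [h]))
      obtain ⟨m, hm⟩ := MvPolynomial.ne_zero_iff.1 h2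
      exact ⟨(MvPolynomial.lcoeff K m).comp (LinearMap.snd K _ _), by simpa using hm⟩
    · obtain ⟨m, hm⟩ := MvPolynomial.ne_zero_iff.1 h1
      exact ⟨(MvPolynomial.lcoeff K m).comp (LinearMap.fst K _ _), by simpa using hm⟩
  obtain ⟨l, hl⟩ := hl
  obtain ⟨hfin, hcard⟩ := homogeneous_set_bound K (2 * a - ∑ i, k i)
  have hle : (PairSet K c a g).ncard ≤ ((Set.univ : Set K) ×ˢ
      {p : BForm K | MvPolynomial.IsHomogeneous p (2 * a - ∑ i, k i)}).ncard := by
    refine Set.ncard_le_ncard_of_injOn (fun p => (l p, w p))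
      (fun p hp => ⟨Set.mem_univ _, (hw p hp).1⟩) ?_ (Set.finite_univ.prod hfin)
    intro p hp p' hp' h
    simp only [Prod.mk.injEq] at h
    have hW : s.1 * (p.2 - p'.2) - s.2 * (p.1 - p'.1) = 0 := by
      have e1 := (hw p hp).2
      have e2 := (hw p' hp').2
      rw [h.2, ← e2] at e1
      linear_combination e1
    obtain ⟨x, hx1, hx2⟩ := exists_const_of_wedge_eq_zero hprim hs.1 hs.2.1
      (hp.1.sub hp'.1) (hp.2.1.sub hp'.2.1) hW
    have hd : p - p' = x • s := by
      ext1
      · simpa [MvPolynomial.smul_eq_C_mul] using hx1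
      · simpa [MvPolynomial.smul_eq_C_mul] using hx2
    have hx : x = 0 := by
      have := congrArg l hd
      rw [map_sub, h.1, sub_self, map_smul, smul_eq_mul] at this
      exact (mul_eq_zero.1 this.symm).resolve_right hl
    rw [hx, zero_smul] at hd
    exact sub_eq_zero.1 hd
  rw [Set.ncard_prod, Set.ncard_univ, Nat.card_eq_fintype_card] at hle
  calc _ ≤ _ := hle
    _ ≤ Fintype.card K * Fintype.card K ^ (2 * a - ∑ i, k i + 1) := by gcongr
    _ = _ := by ring

lemma pairSet_finite {K : Type} [Field K] [Fintype K] (c : Fin 3 → K) (a : ℕ)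
    (g : Fin 3 → BForm K) : (PairSet K c a g).Finite :=
  ((homogeneous_set_bound K a).1.prod (homogeneous_set_bound K a).1).subset
    fun _ hp => ⟨hp.1, hp.2.1⟩

/-! ### The pointwise bound for the counting set -/

/-- Quadruples in `M̃` together with a choice of the three greatest common divisors; only the
properties used for counting are recorded. -/
def MarkedSet (K : Type) [Field K] (c c' : Fin 3 → K) (a a' : ℕ) (k : Fin 3 → ℕ) :
    Set ((Fin 3 → BForm K) × (BForm K × BForm K) × (BForm K × BForm K)) :=
  {y | (∀ i, MvPolynomial.IsHomogeneous (y.1 i) (k i)) ∧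
    (y.2.1 ∈ PairSet K c a y.1 ∧ IsRelPrime y.2.1.1 y.2.1.2) ∧
    (y.2.2 ∈ PairSet K c' a' y.1 ∧ IsRelPrime y.2.2.1 y.2.2.2)}

lemma gcd_set_bound (K : Type) [Field K] [Fintype K] (k : Fin 3 → ℕ) :
    {g : Fin 3 → BForm K | ∀ i, MvPolynomial.IsHomogeneous (g i) (k i)}.Finite ∧
    {g : Fin 3 → BForm K | ∀ i, MvPolynomial.IsHomogeneous (g i) (k i)}.ncard ≤
      Fintype.card K ^ (∑ i, k i + 3) := by
  classical
  have hf := fun i => (homogeneous_set_bound K (k i)).1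
  have e : {g : Fin 3 → BForm K | ∀ i, MvPolynomial.IsHomogeneous (g i) (k i)} =
      ↑(Fintype.piFinset fun i => (hf i).toFinset) := by
    ext g; simp
  rw [e]
  refine ⟨Finset.finite_toSet _, ?_⟩
  rw [Set.ncard_coe_finset, Fintype.card_piFinset]
  calc ∏ i, (hf i).toFinset.card ≤ ∏ i, Fintype.card K ^ (k i + 1) := by
        refine Finset.prod_le_prod' fun i _ => ?_
        rw [← Set.ncard_eq_toFinset_card _ (hf i)]
        exact (homogeneous_set_bound K (k i)).2
    _ = _ := by
        rw [Finset.prod_pow_eq_pow_sum, Finset.sum_add_distrib]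
        simp

lemma markedSet_bound {K : Type} [Field K] [Fintype K] {c c' : Fin 3 → K}
    (hc : Function.Injective c) (hc' : Function.Injective c') {a a' : ℕ} {k : Fin 3 → ℕ}
    (hk : ∑ i, k i ≤ 2 * a) (hk' : ∑ i, k i ≤ 2 * a') :
    (MarkedSet K c c' a a' k).Finite ∧ (MarkedSet K c c' a a' k).ncard ≤
      Fintype.card K ^ (2 * a + 2 * a' - ∑ i, k i + 7) := by
  classical
  obtain ⟨hgf, hgc⟩ := gcd_set_bound K k
  have hfin : (MarkedSet K c c' a a' k).Finite := by
    refine (hgf.prod (((homogeneous_set_bound K a).1.prod (homogeneous_set_bound K a).1).prod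
      ((homogeneous_set_bound K a').1.prod (homogeneous_set_bound K a').1))).subset ?_
    intro y hy
    exact ⟨hy.1, ⟨hy.2.1.1.1, hy.2.1.1.2.1⟩, hy.2.2.1.1, hy.2.2.1.2.1⟩
  refine ⟨hfin, ?_⟩
  rw [Set.ncard_eq_toFinset_card _ hfin]
  have h := Finset.card_le_mul_card_image (f := Prod.fst) hfin.toFinset
    (Fintype.card K ^ (2 * a - ∑ i, k i + 2) * Fintype.card K ^ (2 * a' - ∑ i, k i + 2)) ?_
  · refine h.trans ?_
    have himg : (hfin.toFinset.image Prod.fst).card ≤ Fintype.card K ^ (∑ i, k i + 3) := by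
      refine le_trans ?_ hgc
      rw [Set.ncard_eq_toFinset_card _ hgf]
      refine Finset.card_le_card ?_
      intro g hg
      simp only [Finset.mem_image, Set.Finite.mem_toFinset] at hg ⊢
      obtain ⟨y, hy, rfl⟩ := hg
      exact hy.1
    calc _ ≤ _ := Nat.mul_le_mul_left _ himg
      _ = _ := by
        rw [← pow_add, ← pow_add]
        congr 1
        omega
  · intro g hg
    simp only [Finset.mem_image, Set.Finite.mem_toFinset] at hg
    obtain ⟨y, hy, rfl⟩ := hg
    have hsub : ((hfin.toFinset.filter fun z => z.1 = y.1).card) ≤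
        (PairSet K c a y.1 ×ˢ PairSet K c' a' y.1).ncard := by
      rw [← Set.ncard_coe_finset]
      refine Set.ncard_le_ncard_of_injOn Prod.snd ?_ ?_
        ((pairSet_finite c a y.1).prod (pairSet_finite c' a' y.1))
      · intro z hz
        simp only [Finset.coe_filter, Set.Finite.mem_toFinset, Set.mem_ofPred_eq] at hz
        rw [← hz.2]
        exact ⟨hz.1.2.1.1, hz.1.2.2.1⟩
      · intro z hz z' hz' h
        simp only [Finset.coe_filter, Set.Finite.mem_toFinset, Set.mem_ofPred_eq] at hz hz'
        exact Prod.ext (hz.2.trans hz'.2.symm) h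
    refine hsub.trans ?_
    rw [Set.ncard_prod]
    exact Nat.mul_le_mul (pairSet_bound hc hy.1 hk hy.2.1.1 hy.2.1.2)
      (pairSet_bound hc' hy.1 hk' hy.2.2.1 hy.2.2.2)

/-- Each quadruple carries `(q − 1)³` markings, one for each rescaling of its three greatest common
divisors. -/
lemma mtilde_le_marked {K : Type} [Field K] [Fintype K] {c c' : Fin 3 → K}
    (hc : Function.Injective c) (hc' : Function.Injective c') {a a' : ℕ} {k : Fin 3 → ℕ}
    (hk : ∑ i, k i ≤ 2 * a) (hk' : ∑ i, k i ≤ 2 * a') :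
    (Fintype.card K - 1) ^ 3 * (MtildeSet K 3 c c' a a' k).ncard ≤
      Fintype.card K ^ (2 * a + 2 * a' - ∑ i, k i + 7) := by
  classical
  obtain ⟨hfin, hcard⟩ := markedSet_bound hc hc' hk hk'
  refine le_trans ?_ hcard
  have hex : ∀ x ∈ MtildeSet K 3 c c' a a' k, ∃ g : Fin 3 → BForm K,
      ∀ i, g i ≠ 0 ∧ MvPolynomial.IsHomogeneous (g i) (k i) ∧
        g i ∣ x.1 - MvPolynomial.C (c i) * x.2.1 ∧
        g i ∣ x.2.2.1 - MvPolynomial.C (c' i) * x.2.2.2 := by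
    intro x hx
    have h := hx.2.2.2.2.2.2
    choose h0 h1 g hg using h
    exact ⟨g, fun i => ⟨fun h => h0 i (zero_dvd_iff.1 (h ▸ (hg i).2.1)),
      (hg i).1, (hg i).2.1, (hg i).2.2.1⟩⟩
  choose! g hg using hex
  have hle : ((Set.univ : Set (Fin 3 → Kˣ)) ×ˢ MtildeSet K 3 c c' a a' k).ncard ≤
      (MarkedSet K c c' a a' k).ncard := by
    refine Set.ncard_le_ncard_of_injOn
      (fun y => ((fun i => MvPolynomial.C (y.1 i : K) * g y.2 i),
        (y.2.1, y.2.2.1), (y.2.2.2.1, y.2.2.2.2))) ?_ ?_ hfin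
    · rintro ⟨u, x⟩ ⟨-, hx⟩
      have hu : ∀ i, IsUnit (MvPolynomial.C (u i : K) : BForm K) := fun i =>
        (u i).isUnit.map MvPolynomial.C
      refine ⟨fun i => (hg x hx i).2.1.C_mul _, ⟨⟨hx.1, hx.2.1, fun i => ?_⟩, ?_⟩,
        ⟨⟨hx.2.2.1, hx.2.2.2.1, fun i => ?_⟩, ?_⟩⟩
      · exact (hu i).mul_left_dvd.2 (hg x hx i).2.2.1
      · exact fun d => hx.2.2.2.2.1 d
      · exact (hu i).mul_left_dvd.2 (hg x hx i).2.2.2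
      · exact fun d => hx.2.2.2.2.2.1 d
    · rintro ⟨u, x⟩ ⟨-, hx⟩ ⟨u', x'⟩ ⟨-, hx'⟩ h
      simp only [Prod.mk.injEq] at h
      have hxx : x = x' := by
        ext1
        · exact h.2.1.1
        · ext1
          · exact h.2.1.2
          · exact Prod.ext h.2.2.1 h.2.2.2
      subst hxx
      refine Prod.ext (funext fun i => Units.ext ?_) rfl
      exact MvPolynomial.C_injective _ _ (mul_right_cancel₀ (hg x hx i).1 (congrFun h.1 i))
  rw [Set.ncard_prod, Set.ncard_univ, Nat.card_eq_fintype_card, Fintype.card_fun,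
    Fintype.card_units, Fintype.card_fin] at hle
  exact hle

/-! ### Lattice points of bounded height in the cone -/

/-- The lattice points of height `n` in the cone. -/
def slice (n : ℕ) : Set (ℕ × ℕ × (Fin 3 → ℕ)) :=
  {x | nefVec 3 (vecOf 3 x.1 x.2.1 x.2.2) ∧
    (∑ i, x.2.2 i ≤ 2 * x.1) ∧ (∑ i, x.2.2 i ≤ 2 * x.2.1) ∧ hN 3 x = n}

/-- On the affine hyperplane of height `1`, the invariants `k₁, k₂, k₃` in terms of the coordinates
`(a, a′, k₁, k₂)`. -/
def kCoord (y : Fin 4 → ℝ) : Fin 3 → ℝ :=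
  ![y 2, y 3, 2 * y 0 + 2 * y 1 - 1 - y 2 - y 3]

/-- The section of the real cone at height `1`, in the coordinates `(a, a′, k₁, k₂)`, which give
an integral chart of every hyperplane of constant integral height. -/
def polytope : Set (Fin 4 → ℝ) :=
  {y | (0 ≤ y 0 ∧ 0 ≤ y 1 ∧ 0 ≤ kCoord y 0 ∧ 0 ≤ kCoord y 1 ∧ 0 ≤ kCoord y 2) ∧
    (2 * y 1 ≤ 1 ∧ 2 * y 0 ≤ 1) ∧
    ∀ v : Fin 5 → ℤ, minusOneClass 3 v →
      0 ≤ y 1 * v 1 + y 0 * v 0 + (kCoord y 0 * v 2 + kCoord y 1 * v 3 + kCoord y 2 * v 4)}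

lemma inter_vecOf (a a' : ℕ) (k : Fin 3 → ℕ) (v : Fin 5 → ℤ) :
    inter 3 (vecOf 3 a a' k) v = a' * v 1 + a * v 0 + (k 0 * v 2 + k 1 * v 3 + k 2 * v 4) := by
  have e : (Finset.univ.filter fun i : Fin (3 + 2) => 2 ≤ (i : ℕ)) = {2, 3, 4} := by decide
  have h0 : vecOf 3 a a' k 0 = a' := rfl
  have h1 : vecOf 3 a a' k 1 = a := rfl
  have h2 : vecOf 3 a a' k 2 = -(k 0 : ℤ) := rfl
  have h3 : vecOf 3 a a' k 3 = -(k 1 : ℤ) := rfl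
  have h4 : vecOf 3 a a' k 4 = -(k 2 : ℤ) := rfl
  unfold inter
  rw [e, h0, h1, Finset.sum_insert (by decide), Finset.sum_insert (by decide),
    Finset.sum_singleton, h2, h3, h4]
  ring

lemma polytope_convex : Convex ℝ polytope := by
  rintro y ⟨⟨h0, h1, h2, h3, h4⟩, ⟨h5, h6⟩, h7⟩ z ⟨⟨g0, g1, g2, g3, g4⟩, ⟨g5, g6⟩, g7⟩ s t hs ht hst
  obtain rfl : t = 1 - s := by linarith
  have key : ∀ i, kCoord (s • y + (1 - s) • z) i = s * kCoord y i + (1 - s) * kCoord z i := by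
    intro i
    fin_cases i <;> simp [kCoord]
    ring
  have comb : ∀ {p r : ℝ}, 0 ≤ p → 0 ≤ r → 0 ≤ s * p + (1 - s) * r := fun hp hr =>
    add_nonneg (mul_nonneg hs hp) (mul_nonneg ht hr)
  refine ⟨⟨comb h0 g0, comb h1 g1, ?_, ?_, ?_⟩, ⟨?_, ?_⟩, fun v hv => ?_⟩
  · rw [key]; exact comb h2 g2
  · rw [key]; exact comb h3 g3
  · rw [key]; exact comb h4 g4
  · have := comb (sub_nonneg.2 h5) (sub_nonneg.2 g5)
    simp only [Pi.add_apply, Pi.smul_apply, smul_eq_mul]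
    linarith
  · have := comb (sub_nonneg.2 h6) (sub_nonneg.2 g6)
    simp only [Pi.add_apply, Pi.smul_apply, smul_eq_mul]
    linarith
  · have := comb (h7 v hv) (g7 v hv)
    simp only [Pi.add_apply, Pi.smul_apply, smul_eq_mul, key]
    linarith

lemma polytope_closed : IsClosed polytope := by
  have hk : Continuous kCoord := by
    refine continuous_pi fun i => ?_
    fin_cases i <;> simp [kCoord] <;> fun_prop
  have hk' : ∀ i, Continuous fun y => kCoord y i := fun i => (continuous_apply i).comp hk
  have h0 := hk' 0
  have h1 := hk' 1
  have h2 := hk' 2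
  refine IsClosed.and (IsClosed.and ?_ (IsClosed.and ?_ (IsClosed.and ?_ (IsClosed.and ?_ ?_))))
    (IsClosed.and (IsClosed.and ?_ ?_) ?_)
  all_goals first
    | exact isClosed_le (by fun_prop) (by fun_prop)
    | skip
  simp only [Set.ofPred_forall]
  exact isClosed_iInter fun v => isClosed_iInter fun _ => isClosed_le (by fun_prop) (by fun_prop)

lemma polytope_bounded : Bornology.IsBounded polytope := by
  refine (Metric.isBounded_Icc (0 : Fin 4 → ℝ) 1).subset ?_
  rintro y ⟨⟨h0, h1, h2, h3, h4⟩, ⟨h5, h6⟩, -⟩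
  simp only [kCoord, Matrix.cons_val_zero, Matrix.cons_val_one, Matrix.cons_val] at h2 h3 h4
  constructor <;> intro i <;> fin_cases i <;> simp <;> linarith

lemma hN_eq {x : ℕ × ℕ × (Fin 3 → ℕ)} (h : ∑ i, x.2.2 i ≤ 2 * x.1) {n : ℕ} :
    hN 3 x = n ↔ (2 * x.1 + 2 * x.2.1 : ℤ) = n + (x.2.2 0 + x.2.2 1 + x.2.2 2) := by
  rw [Fin.sum_univ_three] at h
  unfold hN
  rw [Fin.sum_univ_three]
  omega

/-- The chart `(a, a′, 𝐤) ↦ (a, a′, k₁, k₂) / n`. -/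
def chart (n : ℕ) (x : ℕ × ℕ × (Fin 3 → ℕ)) : Fin 4 → ℝ :=
  ![x.1 / n, x.2.1 / n, x.2.2 0 / n, x.2.2 1 / n]

lemma kCoord_chart {n : ℕ} (hn : 0 < n) {x : ℕ × ℕ × (Fin 3 → ℕ)}
    (h : (2 * x.1 + 2 * x.2.1 : ℤ) = n + (x.2.2 0 + x.2.2 1 + x.2.2 2)) (i : Fin 3) :
    kCoord (chart n x) i = x.2.2 i / n := by
  have hn' : (n : ℝ) ≠ 0 := by positivity
  have hr : (2 * x.1 + 2 * x.2.1 : ℝ) = n + (x.2.2 0 + x.2.2 1 + x.2.2 2) := by exact_mod_cast h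
  fin_cases i
  · rfl
  · rfl
  · simp only [kCoord, chart, Matrix.cons_val_zero, Matrix.cons_val_one, Matrix.cons_val,
      Fin.reduceFinMk]
    field_simp
    linarith

lemma chart_mem_polytope_iff {n : ℕ} (hn : 0 < n) {x : ℕ × ℕ × (Fin 3 → ℕ)}
    (h : (2 * x.1 + 2 * x.2.1 : ℤ) = n + (x.2.2 0 + x.2.2 1 + x.2.2 2)) :
    chart n x ∈ polytope ↔ x ∈ slice n := by
  have hn' : (0 : ℝ) < n := by positivity
  have hr : (2 * x.1 + 2 * x.2.1 : ℝ) = n + (x.2.2 0 + x.2.2 1 + x.2.2 2) := by exact_mod_cast h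
  have hnef : (∀ v : Fin 5 → ℤ, minusOneClass 3 v → (0 : ℝ) ≤ chart n x 1 * v 1 + chart n x 0 * v 0
      + (kCoord (chart n x) 0 * v 2 + kCoord (chart n x) 1 * v 3 + kCoord (chart n x) 2 * v 4)) ↔
      nefVec 3 (vecOf 3 x.1 x.2.1 x.2.2) := by
    refine forall_congr' fun v => imp_congr_right fun _ => ?_
    rw [inter_vecOf, kCoord_chart hn h, kCoord_chart hn h, kCoord_chart hn h]
    have e : chart n x 1 * v 1 + chart n x 0 * v 0 + (x.2.2 0 / n * v 2 + x.2.2 1 / n * v 3 +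
        x.2.2 2 / n * v 4) = ((x.2.1 * v 1 + x.1 * v 0 + (x.2.2 0 * v 2 + x.2.2 1 * v 3 +
          x.2.2 2 * v 4) : ℤ) : ℝ) / n := by
      simp only [chart, Matrix.cons_val_zero, Matrix.cons_val_one]
      push_cast
      ring
    rw [e, le_div_iff₀ hn', zero_mul, Int.cast_nonneg_iff]
  have ha : 2 * chart n x 1 ≤ 1 ↔ ∑ i, x.2.2 i ≤ 2 * x.1 := by
    have e : 2 * chart n x 1 = (2 * x.2.1 : ℝ) / n := by simp [chart]; ring
    rw [e, div_le_one hn', Fin.sum_univ_three]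
    constructor
    · intro h'
      have : 2 * x.2.1 ≤ n := by exact_mod_cast h'
      omega
    · intro h'
      have : 2 * x.2.1 ≤ n := by omega
      exact_mod_cast this
  have ha' : 2 * chart n x 0 ≤ 1 ↔ ∑ i, x.2.2 i ≤ 2 * x.2.1 := by
    have e : 2 * chart n x 0 = (2 * x.1 : ℝ) / n := by simp [chart]; ring
    rw [e, div_le_one hn', Fin.sum_univ_three]
    constructor
    · intro h'
      have : 2 * x.1 ≤ n := by exact_mod_cast h'
      omega
    · intro h'
      have : 2 * x.1 ≤ n := by omega
      exact_mod_cast this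
  constructor
  · rintro ⟨-, ⟨h1, h2⟩, h3⟩
    exact ⟨hnef.1 h3, ha.1 h1, ha'.1 h2, (hN_eq (ha.1 h1)).2 h⟩
  · rintro ⟨h1, h2, h3, -⟩
    refine ⟨⟨?_, ?_, ?_, ?_, ?_⟩, ⟨ha.2 h2, ha'.2 h3⟩, hnef.2 h1⟩
    · simp only [chart, Matrix.cons_val_zero]; positivity
    · simp only [chart, Matrix.cons_val_one, Matrix.cons_val_zero]; positivity
    all_goals rw [kCoord_chart hn h]; positivity

open scoped Pointwise in
/-- The chart identifies the points of height `n` with the points of the polytope in the lattice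
`n⁻¹ ℤ⁴`. -/
lemma slice_card {n : ℕ} (hn : 0 < n) :
    Nat.card ↑(polytope ∩ (n : ℝ)⁻¹ • (Submodule.span ℤ (Set.range (Pi.basisFun ℝ (Fin 4))) :
      Set (Fin 4 → ℝ))) = (slice n).ncard := by
  have hn' : (n : ℝ) ≠ 0 := by positivity
  have : NeZero n := ⟨hn.ne'⟩
  have hinj : Set.InjOn (chart n) (slice n) := by
    rintro x hx y hy h
    have hx' := (hN_eq hx.2.1).1 hx.2.2.2
    have hy' := (hN_eq hy.2.1).1 hy.2.2.2
    have h0 := congrFun h 0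
    have h1 := congrFun h 1
    have h2 := congrFun h 2
    have h3 := congrFun h 3
    simp only [chart, Matrix.cons_val_zero, Matrix.cons_val_one, Matrix.cons_val,
      div_left_inj' hn', Nat.cast_inj] at h0 h1 h2 h3
    refine Prod.ext h0 (Prod.ext h1 (funext fun i => ?_))
    fin_cases i
    · exact h2
    · exact h3
    · simp only [Fin.reduceFinMk]; omega
  have himg : polytope ∩ (n : ℝ)⁻¹ • (Submodule.span ℤ (Set.range (Pi.basisFun ℝ (Fin 4))) :
      Set (Fin 4 → ℝ)) = chart n '' slice n := by
    ext y
    constructor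
    · rintro ⟨hy, hL⟩
      have hL' := BoxIntegral.unitPartition.mem_smul_span_iff.1 hL
      choose m hm using hL'
      have hm' : ∀ i, (m i : ℝ) = n * y i := hm
      have hnn : ∀ i, 0 ≤ y i → 0 ≤ m i := fun i hi => by
        have : (0 : ℝ) ≤ m i := by rw [hm']; positivity
        exact_mod_cast this
      obtain ⟨⟨h0, h1, h2, h3, h4⟩, -⟩ := id hy
      obtain ⟨a, ha⟩ := Int.eq_ofNat_of_zero_le (hnn 0 h0)
      obtain ⟨a', ha'⟩ := Int.eq_ofNat_of_zero_le (hnn 1 h1)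
      obtain ⟨k, hk⟩ := Int.eq_ofNat_of_zero_le (hnn 2 h2)
      obtain ⟨k', hk'⟩ := Int.eq_ofNat_of_zero_le (hnn 3 h3)
      have h4' : 0 ≤ 2 * m 0 + 2 * m 1 - n - m 2 - m 3 := by
        have : (0 : ℝ) ≤ ((2 * m 0 + 2 * m 1 - n - m 2 - m 3 : ℤ) : ℝ) := by
          push_cast
          rw [hm', hm', hm', hm']
          have : (0 : ℝ) ≤ n * kCoord y 2 := by positivity
          simp only [kCoord, Matrix.cons_val] at this
          linarith
        exact_mod_cast this
      obtain ⟨k'', hk''⟩ := Int.eq_ofNat_of_zero_le h4'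
      have hch : chart n (a, a', ![k, k', k'']) = y := by
        ext i
        have := hm' i
        fin_cases i <;> simp [chart, div_eq_iff hn'] <;> simp at this
        · rw [ha] at this; push_cast at this; linarith
        · rw [ha'] at this; push_cast at this; linarith
        · rw [hk] at this; push_cast at this; linarith
        · rw [hk'] at this; push_cast at this; linarith
      refine ⟨(a, a', ![k, k', k'']), ?_, hch⟩
      rw [← chart_mem_polytope_iff hn, hch]
      · exact hy
      · simp; omega
    · rintro ⟨x, hx, rfl⟩
      refine ⟨(chart_mem_polytope_iff hn ((hN_eq hx.2.1).1 hx.2.2.2)).2 hx, ?_⟩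
      refine BoxIntegral.unitPartition.mem_smul_span_iff.2 fun i => ?_
      fin_cases i
      · exact ⟨x.1, by simp [chart]; field_simp⟩
      · exact ⟨x.2.1, by simp [chart]; field_simp⟩
      · exact ⟨x.2.2 0, by simp [chart]; field_simp⟩
      · exact ⟨x.2.2 1, by simp [chart]; field_simp⟩
  rw [himg, Nat.card_coe_set_eq, hinj.ncard_image]

lemma slice_asymptotic : ∃ V : ℝ,
    Tendsto (fun n : ℕ => ((slice n).ncard : ℝ) / (n : ℝ) ^ 4) atTop (nhds V) := by
  refine ⟨_, (tendsto_card_div_pow_atTop_volume polytope polytope_bounded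
    polytope_closed.measurableSet (polytope_convex.addHaar_frontier _)).congr' ?_⟩
  filter_upwards [eventually_gt_atTop 0] with n hn
  rw [slice_card hn, Fintype.card_fin]

/-! ### Summation over heights -/

/-- A sum weighted by `q ^ n` with `q > 1` is governed by its last terms, and its asymptotic
behaviour follows from that of the weights by dominated convergence. -/
lemma geometric_sum_asymptotic {q : ℝ} (hq : 1 < q) {M : ℕ → ℝ} {V : ℝ}
    (hV : Tendsto (fun n : ℕ => M n / (n : ℝ) ^ 4) atTop (nhds V)) :
    ∃ A : ℝ, Tendsto (fun d : ℕ => (q ^ d)⁻¹ * ((d : ℝ) ^ 4)⁻¹ *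
      ∑ n ∈ Finset.Icc 1 d, M n * q ^ n) atTop (nhds A) := by
  have hq0 : 0 < q := by linarith
  obtain ⟨B, hB⟩ := hV.abs.bddAbove_range
  have hB' : ∀ n : ℕ, |M n / (n : ℝ) ^ 4| ≤ B := fun n => hB ⟨n, rfl⟩
  have hB0 : 0 ≤ B := (abs_nonneg _).trans (hB' 0)
  let f : ℕ → ℕ → ℝ := fun d j =>
    if j < d then q⁻¹ ^ j * (M (d - j) / (d : ℝ) ^ 4) else 0
  have hsum : Summable fun j : ℕ => B * q⁻¹ ^ j :=
    (summable_geometric_of_lt_one (by positivity) (inv_lt_one_of_one_lt₀ hq)).mul_left B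
  have hlim : ∀ j, Tendsto (f · j) atTop (nhds (q⁻¹ ^ j * (V * 1 ^ 4))) := by
    intro j
    have h1 : Tendsto (fun d : ℕ => M (d - j) / ((d - j : ℕ) : ℝ) ^ 4) atTop (nhds V) :=
      hV.comp (tendsto_sub_atTop_nat j)
    have h2 : Tendsto (fun d : ℕ => ((d : ℝ) - j) / d) atTop (nhds 1) := by
      have h3 : Tendsto (fun d : ℕ => 1 - (j : ℝ) / d) atTop (nhds (1 - 0)) :=
        tendsto_const_nhds.sub (tendsto_const_div_atTop_nhds_zero_nat _)
      rw [sub_zero] at h3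
      refine h3.congr' ?_
      filter_upwards [eventually_gt_atTop 0] with d hd
      have : (d : ℝ) ≠ 0 := by positivity
      field_simp
    refine ((h1.mul (h2.pow 4)).const_mul (q⁻¹ ^ j)).congr' ?_
    filter_upwards [eventually_gt_atTop j] with d hd
    have hd1 : (d : ℝ) ≠ 0 := by
      have : 0 < d := by omega
      positivity
    have hd2 : (d : ℝ) - j ≠ 0 := by
      have : (j : ℝ) < d := by exact_mod_cast hd
      linarith
    simp only [f, if_pos hd]
    rw [Nat.cast_sub hd.le]
    field_simp
  have hbound : ∀ᶠ d : ℕ in atTop, ∀ j, ‖f d j‖ ≤ B * q⁻¹ ^ j := by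
    refine Eventually.of_forall fun d j => ?_
    by_cases hj : j < d
    · simp only [f, if_pos hj]
      have hm : 0 < d - j := by omega
      have hm' : (0 : ℝ) < ((d - j : ℕ) : ℝ) := by exact_mod_cast hm
      rw [Real.norm_eq_abs, abs_mul, abs_of_nonneg (by positivity : 0 ≤ q⁻¹ ^ j), mul_comm]
      gcongr
      refine le_trans ?_ (hB' (d - j))
      rw [abs_div, abs_div, abs_of_nonneg (by positivity : (0 : ℝ) ≤ (d : ℝ) ^ 4),
        abs_of_nonneg (by positivity : (0 : ℝ) ≤ ((d - j : ℕ) : ℝ) ^ 4)]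
      gcongr
      omega
    · simp only [f, if_neg hj, norm_zero]
      positivity
  refine ⟨_, (tendsto_tsum_of_dominated_convergence hsum hlim hbound).congr fun d => ?_⟩
  rw [tsum_eq_sum (s := Finset.range d) (fun j hj => if_neg (by simpa using hj)),
    Finset.mul_sum]
  refine Finset.sum_bij' (fun j _ => d - j) (fun n _ => d - n) ?_ ?_ ?_ ?_ ?_
  · intro j hj; simp at hj ⊢; omega
  · intro n hn; simp at hn ⊢; omega
  · intro j hj; simp at hj ⊢; omega
  · intro n hn; simp at hn ⊢; omega
  · intro j hj
    have hj' : j < d := by simpa using hj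
    simp only [if_pos hj']
    have e : q ^ d = q ^ j * q ^ (d - j) := by rw [← pow_add]; congr 1; omega
    rw [e, inv_pow]
    field_simp

lemma coneSet11_finite (d : ℕ) : (coneSet11 d).Finite := by
  refine ((Set.finite_Iic d).prod ((Set.finite_Iic d).prod
    (Set.finite_Iic (fun _ : Fin 3 => 2 * d)))).subset ?_
  rintro x ⟨-, h1, h2, -, h4⟩
  have h5 := (hN_eq h1).1 rfl
  rw [Fin.sum_univ_three] at h1 h2
  refine ⟨?_, ?_, fun i => ?_⟩
  · simp only [Set.mem_Iic]; omega
  · simp only [Set.mem_Iic]; omega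
  · fin_cases i <;> simp <;> omega

lemma cone_sum_eq (q : ℝ) (d : ℕ) :
    ∑ᶠ x ∈ coneSet11 d, q ^ (hN 3 x) =
      ∑ n ∈ Finset.Icc 1 d, ((slice n).ncard : ℝ) * q ^ n := by
  classical
  have hfin := coneSet11_finite d
  rw [finsum_mem_eq_finite_toFinset_sum _ hfin]
  rw [← Finset.sum_fiberwise_of_maps_to (g := hN 3) (t := Finset.Icc 1 d)]
  · refine Finset.sum_congr rfl fun n hn => ?_
    rw [Finset.sum_congr rfl (g := fun _ => q ^ n)
      (fun x hx => by rw [(Finset.mem_filter.1 hx).2]), Finset.sum_const, nsmul_eq_mul,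
      ← Set.ncard_coe_finset]
    congr 3
    ext x
    have hn' := Finset.mem_Icc.1 hn
    simp only [Finset.coe_filter, Set.Finite.mem_toFinset, Set.mem_ofPred_eq, coneSet11, slice]
    constructor
    · rintro ⟨⟨h1, h2, h3, -⟩, h4⟩
      exact ⟨h1, h2, h3, h4⟩
    · rintro ⟨h1, h2, h3, h4⟩
      exact ⟨⟨h1, h2, h3, by omega, by omega⟩, h4⟩
  · intro x hx
    obtain ⟨-, -, -, h4, h5⟩ := (Set.Finite.mem_toFinset _).1 hx
    exact Finset.mem_Icc.2 ⟨h4, h5⟩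

lemma cone_asymptotic {q : ℝ} (hq : 1 < q) : ∃ A : ℝ, Tendsto (fun d : ℕ =>
    (q ^ d)⁻¹ * ((d : ℝ) ^ 4)⁻¹ * ∑ᶠ x ∈ coneSet11 d, q ^ (hN 3 x)) atTop (nhds A) := by
  obtain ⟨V, hV⟩ := slice_asymptotic
  obtain ⟨A, hA⟩ := geometric_sum_asymptotic hq hV
  exact ⟨A, hA.congr fun d => by rw [cone_sum_eq]⟩

/-! ### The upper limit of the counting function -/

/-- The pointwise bound in the normalization of the counting function. It already holds with
exponent `5` in place of `6`. -/
lemma mtilde_le {K : Type} [Field K] [Fintype K] {c c' : Fin 3 → K}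
    (hc : Function.Injective c) (hc' : Function.Injective c') {d : ℕ}
    {x : ℕ × ℕ × (Fin 3 → ℕ)} (hx : x ∈ coneSet11 d) :
    (((Fintype.card K : ℝ) - 1) ^ 2)⁻¹ *
      ((MtildeSet K 3 c c' x.1 x.2.1 x.2.2).ncard : ℝ) ≤
      ((Fintype.card K : ℝ) ^ 2 * ((1 - (Fintype.card K : ℝ)⁻¹) ^ 6)⁻¹) *
        (Fintype.card K : ℝ) ^ (hN 3 x) := by
  have h := mtilde_le_marked hc hc' hx.2.1 hx.2.2.1
  have hq1 : 1 < Fintype.card K := Fintype.one_lt_card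
  have h' : ((Fintype.card K : ℝ) - 1) ^ 3 *
      ((MtildeSet K 3 c c' x.1 x.2.1 x.2.2).ncard : ℝ) ≤
      (Fintype.card K : ℝ) ^ (hN 3 x + 7) := by
    rw [← Nat.cast_one, ← Nat.cast_sub hq1.le]
    exact_mod_cast h
  have hq : (1 : ℝ) < Fintype.card K := by exact_mod_cast hq1
  generalize (Fintype.card K : ℝ) = q at *
  generalize ((MtildeSet K 3 c c' x.1 x.2.1 x.2.2).ncard : ℝ) = N at *
  have hp : 0 < q - 1 := by linarith
  have e1 : q ^ 2 * ((1 - q⁻¹) ^ 6)⁻¹ * q ^ (hN 3 x) = q ^ (hN 3 x + 7) * q / (q - 1) ^ 6 := by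
    have : 1 - q⁻¹ = (q - 1) / q := by field_simp
    rw [this]
    field_simp
    ring
  have e2 : ((q - 1) ^ 2)⁻¹ * N = (q - 1) ^ 3 * N * (q - 1) / (q - 1) ^ 6 := by
    field_simp
  rw [e1, e2]
  gcongr
  linarith

/-- Upper bound of the correct magnitude for the anticanonical counting function of
rational curves on a split quintic del Pezzo surface: the alpha constant
`α(𝒞) = lim_d q^{−d} d^{−4} Σ_{α ∈ 𝒞 ∩ N₃, 0 < h(α) ≤ d} q^{h(α)}` exists, and
`limsup_d N(𝒞, d)/(q^d d⁴) ≤ α(𝒞) q² (1−q^{−1})^{−6}`. -/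
theorem quintic_delPezzo_upper_bound (K : Type) [Field K] [Fintype K]
    (c c' : Fin 3 → K) (hc : Function.Injective c) (hc' : Function.Injective c') :
    ∃ A : ℝ,
      Tendsto (fun d : ℕ =>
          ((Fintype.card K : ℝ) ^ d)⁻¹ * ((d : ℝ) ^ 4)⁻¹ *
            ∑ᶠ x ∈ coneSet11 d, (Fintype.card K : ℝ) ^ (hN 3 x))
        atTop (nhds A) ∧
      Filter.limsup (fun d : ℕ =>
          (((Fintype.card K : ℝ) - 1) ^ 2)⁻¹ *
            (∑ᶠ x ∈ {x ∈ coneSet11 d | 1 ≤ x.1 ∧ 1 ≤ x.2.1},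
              ((MtildeSet K 3 c c' x.1 x.2.1 x.2.2).ncard : ℝ)) /
            ((Fintype.card K : ℝ) ^ d * (d : ℝ) ^ 4))
        atTop ≤
      A * (Fintype.card K : ℝ) ^ 2 * ((1 - (Fintype.card K : ℝ)⁻¹) ^ 6)⁻¹ := by
  have hq : (1 : ℝ) < Fintype.card K := by exact_mod_cast Fintype.one_lt_card (α := K)
  obtain ⟨A, hA⟩ := cone_asymptotic hq
  refine ⟨A, hA, ?_⟩
  have hA' := hA.mul_const ((Fintype.card K : ℝ) ^ 2 * ((1 - (Fintype.card K : ℝ)⁻¹) ^ 6)⁻¹)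
  rw [mul_assoc, ← hA'.limsup_eq]
  refine limsup_le_limsup (Eventually.of_forall fun d => ?_) ?_ hA'.isBoundedUnder_le
  · have hsub : {x ∈ coneSet11 d | 1 ≤ x.1 ∧ 1 ≤ x.2.1} ⊆ coneSet11 d := fun x hx => hx.1
    have hfin := coneSet11_finite d
    have hfin' := hfin.subset hsub
    have hS : (((Fintype.card K : ℝ) - 1) ^ 2)⁻¹ *
        (∑ᶠ x ∈ {x ∈ coneSet11 d | 1 ≤ x.1 ∧ 1 ≤ x.2.1},
          ((MtildeSet K 3 c c' x.1 x.2.1 x.2.2).ncard : ℝ)) ≤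
        ((Fintype.card K : ℝ) ^ 2 * ((1 - (Fintype.card K : ℝ)⁻¹) ^ 6)⁻¹) *
          ∑ᶠ x ∈ coneSet11 d, (Fintype.card K : ℝ) ^ (hN 3 x) := by
      rw [finsum_mem_eq_finite_toFinset_sum _ hfin', finsum_mem_eq_finite_toFinset_sum _ hfin,
        Finset.mul_sum, Finset.mul_sum]
      refine (Finset.sum_le_sum fun x hx =>
        mtilde_le hc hc' (hsub ((Set.Finite.mem_toFinset _).1 hx))).trans ?_
      refine Finset.sum_le_sum_of_subset_of_nonneg (Set.Finite.toFinset_mono hsub)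
        fun x _ _ => ?_
      have : 0 ≤ 1 - (Fintype.card K : ℝ)⁻¹ := sub_nonneg.2 (inv_le_one_of_one_le₀ hq.le)
      positivity
    calc _ ≤ _ := div_le_div_of_nonneg_right hS (by positivity)
      _ = _ := by
        rw [div_eq_mul_inv, mul_inv]
        ring
  · refine isCoboundedUnder_le_of_le atTop (x := 0) fun d => ?_
    have : 0 ≤ ∑ᶠ x ∈ {x ∈ coneSet11 d | 1 ≤ x.1 ∧ 1 ≤ x.2.1},
        ((MtildeSet K 3 c c' x.1 x.2.1 x.2.2).ncard : ℝ) :=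
      finsum_nonneg fun x => finsum_nonneg fun _ => Nat.cast_nonneg _
    positivity

end
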